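/- Let S and B be algebras over a field F of characteristic 0, and A = S ⊗ B. Suppose S is simple, every element of B is a sum of commutators, and for each n ≥ 1 every element of B is a linear combination of n-th powers b^n with b ∈ B. If f ∈ F⟨X̄⟩ is neither a polynomial identity nor a central polynomial of S, then the linear span of f(A) equals A. -/

import Mathlib

open scoped TensorProduct

/-- Evaluation of a polynomial over a noncommutative algebra at a scalar. -/
noncomputable def evS {F A : Type*} [Field F] [Ring A] [Algebra F A] (t : F) :
    Polynomial A →ₐ[F] A :=
  { Polynomial.eval₂RingHom' (RingHom.id A) (algebraMap F A t)
      (fun a => (Algebra.commutes t a).symm) with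
    commutes' := fun r => Polynomial.eval₂_C _ _ }

theorem evS_eq_sum {F A : Type*} [Field F] [Ring A] [Algebra F A] (t : F) (p : Polynomial A) :
    evS t p = p.sum (fun n a => t ^ n • a) := by
  change Polynomial.eval₂ (RingHom.id A) (algebraMap F A t) p = _
  rw [Polynomial.eval₂_eq_sum]
  congr 1
  funext n a
  change a * _ = _
  rw [← map_pow, Algebra.smul_def, Algebra.commutes]

theorem evS_C {F A : Type*} [Field F] [Ring A] [Algebra F A] (t : F) (a : A) :
    evS t (Polynomial.C a) = a := by
  change Polynomial.eval₂ (RingHom.id A) (algebraMap F A t) _ = _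
  rw [Polynomial.eval₂_C]; rfl

theorem evS_X {F A : Type*} [Field F] [Ring A] [Algebra F A] (t : F) :
    evS t (Polynomial.X : Polynomial A) = algebraMap F A t := by
  change Polynomial.eval₂ (RingHom.id A) (algebraMap F A t) _ = _
  rw [Polynomial.eval₂_X]

/-- Vandermonde argument. -/
theorem coeff_mem_of_evS {F A : Type*} [Field F] [Infinite F] [Ring A] [Algebra F A]
    (L : Submodule F A) (p : Polynomial A) (h : ∀ t : F, evS t p ∈ L) (n : ℕ) :
    p.coeff n ∈ L := by
  by_contra hn
  obtain ⟨φ, hφ, hL⟩ := Submodule.exists_le_ker_of_notMem hn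
  let q : Polynomial F := p.sum (fun n a => Polynomial.monomial n (φ a))
  have hq : ∀ n, q.coeff n = φ (p.coeff n) := by
    intro n
    simp only [q, Polynomial.sum_def, Polynomial.finsetSum_coeff, Polynomial.coeff_monomial]
    rw [Finset.sum_ite_eq' p.support n]
    split_ifs with h1
    · rfl
    · rw [Polynomial.notMem_support_iff.1 h1, map_zero]
  have hz : q = 0 := by
    apply Polynomial.funext
    intro t
    have h1 : φ (evS t p) = 0 := hL (h t)
    rw [evS_eq_sum, Polynomial.sum_def, map_sum] at h1
    simp only [q, Polynomial.sum_def, Polynomial.eval_finsetSum, Polynomial.eval_monomial,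
      Polynomial.eval_zero]
    rw [← h1]
    refine Finset.sum_congr rfl fun i _ => ?_
    rw [map_smul, smul_eq_mul, mul_comm]
  apply hφ
  rw [← hq, hz, Polynomial.coeff_zero]

theorem evS_lift {F A : Type*} [Field F] [Ring A] [Algebra F A] (t : F)
    (a : ℕ → Polynomial A) (f : FreeAlgebra F ℕ) :
    evS t (FreeAlgebra.lift F a f) = FreeAlgebra.lift F (fun i => evS t (a i)) f := by
  have : (evS t).comp (FreeAlgebra.lift F a) = FreeAlgebra.lift F (fun i => evS t (a i)) := by
    apply FreeAlgebra.hom_ext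
    funext i
    simp
  rw [← this]; rfl

theorem coeff_lift_mem {F A : Type*} [Field F] [Infinite F] [Ring A] [Algebra F A]
    (f : FreeAlgebra F ℕ) (a : ℕ → Polynomial A) (n : ℕ) :
    (FreeAlgebra.lift F a f).coeff n ∈
      Submodule.span F {y : A | ∃ a : ℕ → A, (FreeAlgebra.lift F a) f = y} := by
  apply coeff_mem_of_evS
  intro t
  rw [evS_lift]
  exact Submodule.subset_span ⟨_, rfl⟩

theorem coeff_one_lift {F A : Type*} [Field F] [Ring A] [Algebra F A]
    (a : ℕ → A) (r : A) (f : FreeAlgebra F ℕ) :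
    let P := FreeAlgebra.lift F
      (fun i => Polynomial.C (a i) + Polynomial.X * Polynomial.C (a i * r - r * a i)) f
    let v := FreeAlgebra.lift F a f
    P.coeff 0 = v ∧ P.coeff 1 = v * r - r * v := by
  induction f using FreeAlgebra.induction with
  | grade0 c =>
    simp only [AlgHom.commutes, Polynomial.algebraMap_apply]
    refine ⟨by simp, ?_⟩
    rw [Algebra.commutes, sub_self, Polynomial.coeff_C]
    simp
  | grade1 i =>
    simp only [FreeAlgebra.lift_ι_apply]
    refine ⟨by simp, ?_⟩
    rw [Polynomial.coeff_add, Polynomial.coeff_C]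
    simp [Polynomial.coeff_X_mul (n := 0)]
  | mul x y hx hy =>
    simp only [map_mul, Polynomial.mul_coeff_zero, Polynomial.mul_coeff_one] at *
    obtain ⟨h1, h2⟩ := hx
    obtain ⟨h3, h4⟩ := hy
    rw [h1, h2, h3, h4]
    refine ⟨rfl, by noncomm_ring⟩
  | add x y hx hy =>
    simp only [map_add, Polynomial.coeff_add] at *
    obtain ⟨h1, h2⟩ := hx
    obtain ⟨h3, h4⟩ := hy
    rw [h1, h2, h3, h4]
    refine ⟨rfl, by noncomm_ring⟩

theorem span_lie {F A : Type*} [Field F] [Infinite F] [Ring A] [Algebra F A]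
    (f : FreeAlgebra F ℕ) (r x : A)
    (hx : x ∈ Submodule.span F {y : A | ∃ a : ℕ → A, (FreeAlgebra.lift F a) f = y}) :
    x * r - r * x ∈ Submodule.span F {y : A | ∃ a : ℕ → A, (FreeAlgebra.lift F a) f = y} := by
  induction hx using Submodule.span_induction with
  | mem x h =>
    obtain ⟨a, rfl⟩ := h
    have := (coeff_one_lift a r f).2
    rw [← this]
    exact coeff_lift_mem f _ 1
  | zero => simp
  | add x y _ _ hx hy =>
    have := Submodule.add_mem _ hx hy
    convert this using 1
    noncomm_ring
  | smul c x _ hx =>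
    have := Submodule.smul_mem _ c hx
    convert this using 1
    rw [smul_sub, smul_mul_assoc, mul_smul_comm]

theorem coeff_tmul {F S B : Type*} [Field F] [Ring S] [Algebra F S] [Ring B] [Algebra F B]
    (s : ℕ → S) (b : B) (f : FreeAlgebra F ℕ) : ∀ n : ℕ,
    (FreeAlgebra.lift F
      (fun i => (Polynomial.X * Polynomial.C (s i ⊗ₜ[F] b) : Polynomial (S ⊗[F] B))) f).coeff n
    = (FreeAlgebra.lift F
      (fun i => (Polynomial.X * Polynomial.C (s i) : Polynomial S)) f).coeff n ⊗ₜ[F] (b ^ n) := by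
  induction f using FreeAlgebra.induction with
  | grade0 c =>
    intro n
    simp only [AlgHom.commutes, Polynomial.algebraMap_apply, Polynomial.coeff_C]
    split_ifs with h
    · subst h
      simp [Algebra.TensorProduct.algebraMap_apply]
    · simp
  | grade1 i =>
    intro n
    simp only [FreeAlgebra.lift_ι_apply, Polynomial.coeff_mul_C, Polynomial.coeff_X]
    split_ifs with h
    · subst h
      simp
    · simp
  | mul x y hx hy =>
    intro n
    simp only [map_mul, Polynomial.coeff_mul, TensorProduct.sum_tmul]
    refine Finset.sum_congr rfl fun ij hij => ?_
    rw [hx, hy, Algebra.TensorProduct.tmul_mul_tmul, ← pow_add, Finset.HasAntidiagonal.mem_antidiagonal.1 hij]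
  | add x y hx hy =>
    intro n
    simp only [map_add, Polynomial.coeff_add, TensorProduct.add_tmul, hx, hy]

theorem coeff_zero_center {F S : Type*} [Field F] [Ring S] [Algebra F S]
    (s : ℕ → S) (f : FreeAlgebra F ℕ) :
    (FreeAlgebra.lift F
      (fun i => (Polynomial.X * Polynomial.C (s i) : Polynomial S)) f).coeff 0 ∈ Set.center S := by
  induction f using FreeAlgebra.induction with
  | grade0 c =>
    simp only [AlgHom.commutes, Polynomial.algebraMap_apply, Polynomial.coeff_C_zero]
    exact (Subalgebra.center F S).algebraMap_mem c
  | grade1 i => simp [Set.zero_mem_center]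
  | mul x y hx hy =>
    simp only [map_mul, Polynomial.mul_coeff_zero]
    exact Set.mul_mem_center hx hy
  | add x y hx hy =>
    simp only [map_add, Polynomial.coeff_add]
    exact Set.add_mem_center hx hy

theorem stmt3 {F S B : Type*} [Field F] [CharZero F]
    [Ring S] [Algebra F S] [Ring B] [Algebra F B]
    (hsimple : ∀ I : TwoSidedIdeal S, I = ⊥ ∨ I = ⊤) (hS2 : ∃ a b : S, a * b ≠ 0)
    (hcomm : ∀ b : B, b ∈ AddSubgroup.closure {x : B | ∃ u v : B, x = u * v - v * u})
    (hpow : ∀ n : ℕ, 1 ≤ n → ∀ b : B, b ∈ Submodule.span F {x : B | ∃ c : B, x = c ^ n})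
    (f : FreeAlgebra F ℕ)
    (hf : ∃ a : ℕ → S, (FreeAlgebra.lift F a) f ∉ Set.center S) :
    Submodule.span F
      {y : S ⊗[F] B | ∃ a : ℕ → S ⊗[F] B, (FreeAlgebra.lift F a) f = y} = ⊤ := by
  have hLie := fun r x => span_lie (A := S ⊗[F] B) f r x
  have hco := fun a n => coeff_lift_mem (A := S ⊗[F] B) f a n
  set L := Submodule.span F
      {y : S ⊗[F] B | ∃ a : ℕ → S ⊗[F] B, (FreeAlgebra.lift F a) f = y} with hLdef
  -- a noncentral element `c` with `c ⊗ B ⊆ L`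
  obtain ⟨c, hc, hcL⟩ : ∃ c : S, c ∉ Set.center S ∧ ∀ b : B, c ⊗ₜ[F] b ∈ L := by
    obtain ⟨s, hs⟩ := hf
    set p := FreeAlgebra.lift F
      (fun i => (Polynomial.X * Polynomial.C (s i) : Polynomial S)) f with hp
    have h1 : evS (1 : F) p = FreeAlgebra.lift F s f := by
      rw [hp, evS_lift]
      simp [evS_X, evS_C]
    obtain ⟨n, hn⟩ : ∃ n, p.coeff n ∉ Set.center S := by
      by_contra! hall
      apply hs
      rw [← h1, evS_eq_sum, Polynomial.sum_def]
      simp only [one_pow, one_smul]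
      exact (Subring.center S).sum_mem fun i _ => hall i
    have hn1 : 1 ≤ n := by
      rcases Nat.eq_zero_or_pos n with h | h
      · subst h
        exact absurd (coeff_zero_center s f) hn
      · exact h
    refine ⟨p.coeff n, hn, fun b => ?_⟩
    have hb := hpow n hn1 b
    induction hb using Submodule.span_induction with
    | mem x h =>
      obtain ⟨d, rfl⟩ := h
      rw [hp, ← coeff_tmul]
      exact hco _ _
    | zero => simp
    | add x y _ _ hx hy =>
      rw [TensorProduct.tmul_add]
      exact L.add_mem hx hy
    | smul k x _ hx =>
      rw [TensorProduct.tmul_smul]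
      exact L.smul_mem k hx
  have hlie1 : ∀ u t : S, (∀ b : B, u ⊗ₜ[F] b ∈ L) → ∀ b : B, (u * t - t * u) ⊗ₜ[F] b ∈ L := by
    intro u t hu b
    have := hLie (t ⊗ₜ 1) _ (hu b)
    simpa [TensorProduct.sub_tmul] using this
  have hright : ∀ u t : S, (∀ b : B, u ⊗ₜ[F] b ∈ L) → ∀ b : B, (u * t) ⊗ₜ[F] b ∈ L := by
    intro u t hu b
    have hb := hcomm b
    induction hb using AddSubgroup.closure_induction with
    | mem x h =>
      obtain ⟨b, b', rfl⟩ := h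
      have e1 := hLie (t ⊗ₜ b') _ (hu b)
      have e2 := hlie1 u t hu (b' * b)
      have e3 := L.sub_mem e1 e2
      convert e3 using 1
      simp only [Algebra.TensorProduct.tmul_mul_tmul, TensorProduct.sub_tmul,
        TensorProduct.tmul_sub]
      abel
    | zero => simp
    | add x y _ _ hx hy =>
      rw [TensorProduct.tmul_add]
      exact L.add_mem hx hy
    | neg x _ hx =>
      rw [TensorProduct.tmul_neg]
      exact L.neg_mem hx
  have hleft : ∀ t u : S, (∀ b : B, u ⊗ₜ[F] b ∈ L) → ∀ b : B, (t * u) ⊗ₜ[F] b ∈ L := by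
    intro t u hu b
    have := L.sub_mem (hright u t hu b) (hlie1 u t hu b)
    rwa [← TensorProduct.sub_tmul, sub_sub_cancel] at this
  let I : TwoSidedIdeal S := TwoSidedIdeal.mk' {u : S | ∀ b : B, u ⊗ₜ[F] b ∈ L}
    (fun b => by simp)
    (fun {x y} hx hy b => by
      rw [TensorProduct.add_tmul]
      exact L.add_mem (hx b) (hy b))
    (fun {x} hx b => by
      rw [TensorProduct.neg_tmul]
      exact L.neg_mem (hx b))
    (fun {x y} hy => hleft x y hy)
    (fun {x y} hx => hright x y hx)
  have hmem : ∀ u : S, u ∈ I ↔ ∀ b : B, u ⊗ₜ[F] b ∈ L := fun u =>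
    TwoSidedIdeal.mem_mk' _ _ _ _ _ _ u
  have hI : I = ⊤ := by
    rcases hsimple I with h | h
    · exfalso
      have h0 : c ∈ I := (hmem c).2 hcL
      rw [h, TwoSidedIdeal.mem_bot] at h0
      exact hc (h0 ▸ Set.zero_mem_center)
    · exact h
  rw [eq_top_iff]
  intro x _
  induction x using TensorProduct.induction_on with
  | zero => exact L.zero_mem
  | tmul u b =>
    refine (hmem u).1 ?_ b
    rw [hI]
    trivial
  | add x y hx hy => exact L.add_mem (hx trivial) (hy trivial)
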